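/- Fix ρ > 0, λ ∈ ℝ, α ∈ ℝ and R > 0, and let (γ_n) be positive reals with γ_n/n^α → ρ as n → ∞. Set λ_n = n^(n(α−1))·e^(nλ), c_n = 2γ_n·κ_{n-1}/(n·κ_n), and E_n = λ_n·Γ(n+1)·κ_n·c_n^(−n). If √2·ρ·R/√π > 1, then (1/n)·ln( E_n·Γ_u(n, c_n·n^(3/2−α)·R) ) → λ + ln(√(2πe)·R) − √2·ρ·R/√π as n → ∞, while if √2·ρ·R/√π < 1 the same expression converges to λ + ln(π/(ρ√e)). Symmetrically, if √2·ρ·R/√π < 1, then (1/n)·ln( E_n·Γ_ℓ(n, c_n·n^(3/2−α)·R) ) → λ + ln(√(2πe)·R) − √2·ρ·R/√π, while if √2·ρ·R/√π > 1 it converges to λ + ln(π/(ρ√e)). -/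

import Mathlib

open Filter Real

/-- `κ n`, the volume of the unit ball in `ℝⁿ`. -/
noncomputable def kappa (n : ℕ) : ℝ := Real.pi ^ ((n : ℝ) / 2) / Real.Gamma ((n : ℝ) / 2 + 1)

/-- The upper regularized incomplete gamma function `Γ_u(x, R)`. -/
noncomputable def gammaU (x R : ℝ) : ℝ :=
  (∫ t in Set.Ioi R, t ^ (x - 1) * Real.exp (-t)) / Real.Gamma x

/-- The lower regularized incomplete gamma function `Γ_ℓ(x, R)`. -/
noncomputable def gammaL (x R : ℝ) : ℝ :=
  (∫ t in Set.Ioc (0 : ℝ) R, t ^ (x - 1) * Real.exp (-t)) / Real.Gamma x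

/-!
The exponential rate of a product is the sum of the rates, so the total count `E n` and the
regularized incomplete gamma factor can be treated separately.

For `E n`, log-convexity of `Γ` gives `Γ(x + 1/2) ~ √x Γ(x)`, hence `κ (n - 1) / κ n ~ √(n / 2π)`.
This determines `c n` up to a factor tending to one, and by the ratio test also the rate of
`κ n * √n!`. The remaining superexponential factors cancel up to a power of `n! / n ^ n`, whose
rate is `-1`.

For the incomplete gamma functions with cut-off `x n ~ s n`, exponential tilting by `1 - n / x`
(the Chernoff bound for the gamma distribution) bounds the tail not containing the mode by
`((x / n) exp(1 - x / n)) ^ n`, and elementary lower bounds have the same rate `log s + 1 - s`.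
This rate is negative for `s ≠ 1`, so the complementary tail tends to one and has rate zero.
-/

open MeasureTheory Set Topology

/-! ### Exponential rates of sequences -/

/-- The sequence `f` grows like `exp (v n)` to first order in the exponent. Eventual positivity is
part of the notion, because `Real.log` has junk values at nonpositive arguments. -/
structure HasExpRate (f : ℕ → ℝ) (v : ℝ) : Prop where
  eventually_pos : ∀ᶠ n in atTop, 0 < f n
  tendsto_log : Tendsto (fun n : ℕ => 1 / (n : ℝ) * log (f n)) atTop (𝓝 v)

namespace HasExpRate

variable {f g h : ℕ → ℝ} {v w L : ℝ}

lemma congr' (hf : HasExpRate f v) (hfg : f =ᶠ[atTop] g) : HasExpRate g v where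
  eventually_pos := by
    filter_upwards [hf.eventually_pos, hfg] with n hn hfgn
    rwa [← hfgn]
  tendsto_log := hf.tendsto_log.congr' (hfg.mono fun n hn => by rw [hn])

lemma mul (hf : HasExpRate f v) (hg : HasExpRate g w) :
    HasExpRate (fun n => f n * g n) (v + w) where
  eventually_pos := by
    filter_upwards [hf.eventually_pos, hg.eventually_pos] with n hfn hgn
    positivity
  tendsto_log := by
    refine (hf.tendsto_log.add hg.tendsto_log).congr' ?_
    filter_upwards [hf.eventually_pos, hg.eventually_pos] with n hfn hgn
    rw [log_mul hfn.ne' hgn.ne', mul_add]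

lemma rpow_const (hf : HasExpRate f v) (q : ℝ) : HasExpRate (fun n => f n ^ q) (q * v) where
  eventually_pos := hf.eventually_pos.mono fun n hn => rpow_pos_of_pos hn q
  tendsto_log := by
    refine (hf.tendsto_log.const_mul q).congr' ?_
    filter_upwards [hf.eventually_pos] with n hn
    rw [log_rpow hn, mul_left_comm]

lemma inv (hf : HasExpRate f v) : HasExpRate (fun n => (f n)⁻¹) (-v) := by
  simpa only [rpow_neg_one, neg_one_mul] using hf.rpow_const (-1)

lemma div (hf : HasExpRate f v) (hg : HasExpRate g w) :
    HasExpRate (fun n => f n / g n) (v - w) := by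
  simpa only [div_eq_mul_inv, sub_eq_add_neg] using hf.mul hg.inv

lemma of_tendsto (hf : Tendsto f atTop (𝓝 L)) (hL : 0 < L) : HasExpRate f 0 where
  eventually_pos := hf.eventually_const_lt hL
  tendsto_log := by
    simpa only [zero_mul] using
      (tendsto_one_div_atTop_nhds_zero_nat (𝕜 := ℝ)).mul (hf.log hL.ne')

lemma pow_of_tendsto (hf : Tendsto f atTop (𝓝 L)) (hL : 0 < L) :
    HasExpRate (fun n => f n ^ n) (log L) where
  eventually_pos := (hf.eventually_const_lt hL).mono fun n hn => pow_pos hn n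
  tendsto_log := by
    refine (hf.log hL.ne').congr' ?_
    filter_upwards [eventually_ne_atTop 0] with n hn
    rw [log_pow]
    field_simp

/-- The ratio test: telescoping turns the logarithms into Cesàro means. -/
lemma of_tendsto_succ_div (hf : ∀ᶠ n in atTop, 0 < f n)
    (hratio : Tendsto (fun n => f (n + 1) / f n) atTop (𝓝 L)) (hL : 0 < L) :
    HasExpRate f (log L) where
  eventually_pos := hf
  tendsto_log := by
    have hdiff : Tendsto (fun n => log (f (n + 1)) - log (f n)) atTop (𝓝 (log L)) := by
      refine (hratio.log hL.ne').congr' ?_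
      filter_upwards [hf, (tendsto_add_atTop_nat 1).eventually hf] with n hn hn1
      exact log_div hn1.ne' hn.ne'
    have hinit : Tendsto (fun n : ℕ => 1 / (n : ℝ) * log (f 0)) atTop (𝓝 0) := by
      simpa only [zero_mul] using
        (tendsto_one_div_atTop_nhds_zero_nat (𝕜 := ℝ)).mul_const (log (f 0))
    refine (zero_add (log L) ▸ hinit.add hdiff.cesaro).congr fun n => ?_
    rw [Finset.sum_range_sub (fun i => log (f i)), one_div, ← mul_add, add_sub_cancel]

lemma squeeze (hf : HasExpRate f v) (hh : HasExpRate h v) (hfg : ∀ᶠ n in atTop, f n ≤ g n)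
    (hgh : ∀ᶠ n in atTop, g n ≤ h n) : HasExpRate g v where
  eventually_pos := by
    filter_upwards [hf.eventually_pos, hfg] with n hfn hfgn
    exact hfn.trans_le hfgn
  tendsto_log := by
    refine tendsto_of_tendsto_of_tendsto_of_le_of_le' hf.tendsto_log hh.tendsto_log ?_ ?_
    · filter_upwards [hf.eventually_pos, hfg] with n hfn hfgn
      gcongr
    · filter_upwards [hf.eventually_pos, hfg, hgh] with n hfn hfgn hghn
      have hgn : 0 < g n := hfn.trans_le hfgn
      gcongr

lemma tendsto_zero (hf : HasExpRate f v) (hv : v < 0) : Tendsto f atTop (𝓝 0) := by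
  have hlog : Tendsto (fun n : ℕ => (n : ℝ) * (1 / n * log (f n))) atTop atBot :=
    tendsto_natCast_atTop_atTop.atTop_mul_neg hv hf.tendsto_log
  refine (tendsto_exp_atBot.comp hlog).congr' ?_
  filter_upwards [hf.eventually_pos, eventually_ne_atTop 0] with n hfn hn
  rw [Function.comp_apply, ← mul_assoc, mul_one_div_cancel (by positivity), one_mul, exp_log hfn]

end HasExpRate

lemma hasExpRate_factorial_div_pow :
    HasExpRate (fun n => (n.factorial : ℝ) / (n : ℝ) ^ n) (-1) := by
  have hratio : Tendsto (fun n : ℕ => ((1 + 1 / (n : ℝ)) ^ n)⁻¹) atTop (𝓝 (exp 1)⁻¹) :=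
    (tendsto_one_add_div_pow_exp 1).inv₀ (exp_ne_zero 1)
  rw [← exp_neg] at hratio
  rw [← log_exp (-1)]
  refine HasExpRate.of_tendsto_succ_div ?_ (hratio.congr' ?_) (exp_pos _)
  · filter_upwards [eventually_gt_atTop 0] with n hn
    positivity
  · filter_upwards [eventually_gt_atTop 0] with n hn
    rw [Nat.factorial_succ, one_add_div (by positivity), div_pow]
    push_cast
    rw [pow_succ']
    field_simp

/-! ### Volumes of unit balls -/

lemma Gamma_add_half_le {x : ℝ} (hx : 0 < x) : Gamma (x + 1 / 2) ≤ √x * Gamma x := by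
  have hconvex := Gamma_mul_add_mul_le_rpow_Gamma_mul_rpow_Gamma (s := x) (t := x + 1)
    (a := 1 / 2) (b := 1 / 2) hx (by positivity) (by norm_num) (by norm_num) (by norm_num)
  calc Gamma (x + 1 / 2) = Gamma (1 / 2 * x + 1 / 2 * (x + 1)) := by ring_nf
    _ ≤ √(Gamma x) * √(Gamma (x + 1)) := by simpa only [← sqrt_eq_rpow] using hconvex
    _ = √x * Gamma x := by
      rw [Gamma_add_one hx.ne', sqrt_mul hx.le, mul_left_comm,
        mul_self_sqrt (Gamma_pos_of_pos hx).le]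

lemma tendsto_Gamma_add_half_div :
    Tendsto (fun x : ℝ => Gamma (x + 1 / 2) / (√x * Gamma x)) atTop (𝓝 1) := by
  have hlower : Tendsto (fun x : ℝ => √(x / (x + 1 / 2))) atTop (𝓝 1) := by
    have hdecay : Tendsto (fun x : ℝ => 1 / 2 / (x + 1 / 2)) atTop (𝓝 0) :=
      (tendsto_atTop_add_const_right _ (1 / 2) tendsto_id).const_div_atTop (1 / 2)
    have hsqrt : Tendsto (fun x : ℝ => √(1 - 1 / 2 / (x + 1 / 2))) atTop (𝓝 1) := by
      simpa only [sub_zero, sqrt_one] using (hdecay.const_sub 1).sqrt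
    refine hsqrt.congr' ?_
    filter_upwards [eventually_gt_atTop 0] with x hx
    congr 1
    field_simp
    ring
  refine tendsto_of_tendsto_of_tendsto_of_le_of_le' hlower tendsto_const_nhds ?_ ?_
  · filter_upwards [eventually_gt_atTop 0] with x hx
    have hstep : x * Gamma x ≤ √(x + 1 / 2) * Gamma (x + 1 / 2) := by
      rw [← Gamma_add_one hx.ne']
      convert Gamma_add_half_le (x := x + 1 / 2) (by positivity) using 2
      ring
    rw [sqrt_div hx.le, div_le_div_iff₀ (by positivity) (by positivity), ← mul_assoc,
      mul_self_sqrt hx.le, mul_comm (Gamma _)]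
    exact hstep
  · filter_upwards [eventually_gt_atTop 0] with x hx
    exact div_le_one_of_le₀ (Gamma_add_half_le hx) (by positivity)

lemma kappa_pos (n : ℕ) : 0 < kappa n := by
  unfold kappa
  positivity

lemma kappa_pred_div_kappa {n : ℕ} (hn : 0 < n) :
    kappa (n - 1) / kappa n = Gamma ((n : ℝ) / 2 + 1) / (√π * Gamma ((n : ℝ) / 2 + 1 / 2)) := by
  have hpi : π ^ ((n : ℝ) / 2) = π ^ (((n : ℝ) - 1) / 2) * √π := by
    rw [sqrt_eq_rpow, ← rpow_add pi_pos]
    ring_nf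
  rw [kappa, kappa, Nat.cast_pred hn, hpi,
    show ((n : ℝ) - 1) / 2 + 1 = n / 2 + 1 / 2 by ring]
  field_simp

lemma tendsto_kappa_pred_div_sqrt_mul_kappa :
    Tendsto (fun n : ℕ => kappa (n - 1) / (√n * kappa n)) atTop (𝓝 (√(2 * π))⁻¹) := by
  have hhalf : Tendsto (fun n : ℕ => (n : ℝ) / 2) atTop atTop :=
    tendsto_natCast_atTop_atTop.atTop_div_const two_pos
  have hlim := ((tendsto_Gamma_add_half_div.comp hhalf).inv₀ one_ne_zero).const_mul (√(2 * π))⁻¹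
  rw [inv_one, mul_one] at hlim
  refine hlim.congr' ?_
  filter_upwards [eventually_gt_atTop 0] with n hn
  have hsqrt_n : √(n : ℝ) ^ 2 = n := sq_sqrt n.cast_nonneg
  have hsqrt_two : √(2 : ℝ) ^ 2 = 2 := sq_sqrt zero_le_two
  rw [mul_comm √(n : ℝ), ← div_div, kappa_pred_div_kappa hn, Function.comp_apply,
    Gamma_add_one (by positivity), sqrt_mul zero_le_two, sqrt_div n.cast_nonneg]
  field_simp
  linear_combination 2 * hsqrt_n - n * hsqrt_two

lemma hasExpRate_kappa_mul_sqrt_factorial :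
    HasExpRate (fun n => kappa n * √n.factorial) (log √(2 * π)) := by
  have hratio := (tendsto_kappa_pred_div_sqrt_mul_kappa.comp (tendsto_add_atTop_nat 1)).inv₀
    (by positivity)
  rw [inv_inv] at hratio
  refine HasExpRate.of_tendsto_succ_div ?_ (hratio.congr fun n => ?_) (by positivity)
  · exact .of_forall fun n => mul_pos (kappa_pos n) (by positivity)
  · have hkappa := kappa_pos n
    rw [Function.comp_apply, add_tsub_cancel_right, inv_div, Nat.factorial_succ, Nat.cast_mul,
      sqrt_mul (Nat.cast_nonneg _)]
    field_simp

/-! ### Regularized incomplete gamma functions -/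

section IncompleteGamma

variable {p x : ℝ}

lemma integrableOn_rpow_mul_exp_neg_mul {r : ℝ} (hp : 0 < p) (hr : 0 < r) :
    IntegrableOn (fun t : ℝ => t ^ (p - 1) * exp (-(r * t))) (Ioi 0) := by
  simpa only [rpow_one, neg_mul] using
    integrableOn_rpow_mul_exp_neg_mul_rpow (p := 1) (by linarith) one_pos hr

lemma integrableOn_rpow_mul_exp_neg (hp : 0 < p) :
    IntegrableOn (fun t : ℝ => t ^ (p - 1) * exp (-t)) (Ioi 0) := by
  simpa only [one_mul] using integrableOn_rpow_mul_exp_neg_mul hp one_pos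

lemma gammaU_add_gammaL (hp : 0 < p) (hx : 0 ≤ x) : gammaU p x + gammaL p x = 1 := by
  have hint := integrableOn_rpow_mul_exp_neg hp
  rw [gammaU, gammaL, ← add_div, add_comm,
    ← setIntegral_union Ioc_disjoint_Ioi_same measurableSet_Ioi
      (hint.mono_set Ioc_subset_Ioi_self) (hint.mono_set (Ioi_subset_Ioi hx)),
    Ioc_union_Ioi_eq_Ioi hx, div_eq_one_iff_eq (Gamma_pos_of_pos hp).ne', Gamma_eq_integral hp]
  simp only [mul_comm]

/-- The Chernoff bound for the gamma distribution; `1 - p / x` is the optimal tilt. -/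
lemma setIntegral_rpow_mul_exp_neg_le {S : Set ℝ} (hp : 0 < p) (hx : 0 < x)
    (hS : MeasurableSet S) (hS_pos : S ⊆ Ioi 0) (htilt : ∀ t ∈ S, 0 ≤ (1 - p / x) * (t - x)) :
    ∫ t in S, t ^ (p - 1) * exp (-t) ≤ (x / p * exp (1 - x / p)) ^ p * Gamma p := by
  have htilted : IntegrableOn (fun t => exp (p - x) * (t ^ (p - 1) * exp (-(p / x * t)))) (Ioi 0) :=
    (integrableOn_rpow_mul_exp_neg_mul hp (by positivity)).const_mul _
  calc ∫ t in S, t ^ (p - 1) * exp (-t)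
      ≤ ∫ t in S, exp (p - x) * (t ^ (p - 1) * exp (-(p / x * t))) := by
        refine setIntegral_mono_on ((integrableOn_rpow_mul_exp_neg hp).mono_set hS_pos)
          (htilted.mono_set hS_pos) hS fun t ht => ?_
        have ht_pos : 0 < t := hS_pos ht
        have hexponent : p - x + -(p / x * t) = -t + (1 - p / x) * (t - x) := by
          field_simp
          ring
        rw [mul_left_comm, ← exp_add, hexponent]
        gcongr
        linarith [htilt t ht]
    _ ≤ ∫ t in Ioi 0, exp (p - x) * (t ^ (p - 1) * exp (-(p / x * t))) := by
        refine setIntegral_mono_set htilted ?_ hS_pos.eventuallyLE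
        filter_upwards [ae_restrict_mem measurableSet_Ioi] with t (ht : 0 < t)
        positivity
    _ = exp (p - x) * ((x / p) ^ p * Gamma p) := by
        rw [integral_const_mul, integral_rpow_mul_exp_neg_mul_Ioi hp (by positivity), one_div_div]
    _ = (x / p * exp (1 - x / p)) ^ p * Gamma p := by
        rw [mul_rpow (by positivity) (exp_pos _).le, ← exp_mul, sub_mul, one_mul,
          div_mul_cancel₀ _ hp.ne']
        ring

lemma gammaU_le (hp : 0 < p) (hpx : p ≤ x) : gammaU p x ≤ (x / p * exp (1 - x / p)) ^ p := by
  have hx : 0 < x := hp.trans_le hpx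
  refine div_le_of_le_mul₀ (Gamma_pos_of_pos hp).le (by positivity) ?_
  refine setIntegral_rpow_mul_exp_neg_le hp hx measurableSet_Ioi (Ioi_subset_Ioi hx.le)
    fun t (ht : x < t) => mul_nonneg ?_ (by linarith)
  linarith [div_le_one_of_le₀ hpx hx.le]

lemma gammaL_le (hx : 0 < x) (hxp : x ≤ p) : gammaL p x ≤ (x / p * exp (1 - x / p)) ^ p := by
  have hp : 0 < p := hx.trans_le hxp
  refine div_le_of_le_mul₀ (Gamma_pos_of_pos hp).le (by positivity) ?_
  refine setIntegral_rpow_mul_exp_neg_le hp hx measurableSet_Ioc Ioc_subset_Ioi_self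
    fun t ht => mul_nonneg_of_nonpos_of_nonpos ?_ (by linarith [ht.2])
  linarith [(one_le_div hx).2 hxp]

lemma le_gammaU (hp : 1 ≤ p) (hx : 0 ≤ x) : x ^ (p - 1) * exp (-x) / Gamma p ≤ gammaU p x := by
  have hp_pos : 0 < p := by linarith
  refine div_le_div_of_nonneg_right ?_ (Gamma_pos_of_pos hp_pos).le
  rw [← integral_exp_neg_Ioi, ← integral_const_mul]
  refine setIntegral_mono_on ((integrableOn_exp_neg_Ioi x).const_mul _)
    ((integrableOn_rpow_mul_exp_neg hp_pos).mono_set (Ioi_subset_Ioi hx)) measurableSet_Ioi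
    fun t (ht : x < t) => ?_
  gcongr

lemma le_gammaL (hp : 0 < p) (hx : 0 ≤ x) : x ^ p * exp (-x) / Gamma (p + 1) ≤ gammaL p x := by
  have hmono : ∫ t in Ioc 0 x, t ^ (p - 1) * exp (-x) ≤ ∫ t in Ioc 0 x, t ^ (p - 1) * exp (-t) := by
    refine setIntegral_mono_on ?_
      ((integrableOn_rpow_mul_exp_neg hp).mono_set Ioc_subset_Ioi_self) measurableSet_Ioc
      fun t ht => ?_
    · exact ((intervalIntegrable_iff_integrableOn_Ioc_of_le hx).1
        (intervalIntegral.intervalIntegrable_rpow' (by linarith))).mul_const _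
    · have := ht.1
      gcongr
      exact ht.2
  have hpower : ∫ t in Ioc 0 x, t ^ (p - 1) = x ^ p / p := by
    rw [← intervalIntegral.integral_of_le hx, integral_rpow (Or.inl (by linarith)),
      sub_add_cancel, zero_rpow hp.ne', sub_zero]
  rw [integral_mul_const, hpower] at hmono
  rw [gammaL, Gamma_add_one hp.ne', ← div_div, mul_div_right_comm]
  exact div_le_div_of_nonneg_right hmono (Gamma_pos_of_pos hp).le

end IncompleteGamma

section IncompleteGammaRates

variable {x : ℕ → ℝ} {s : ℝ}

lemma eventually_pos_of_tendsto_div_natCast (hs : 0 < s)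
    (hx : Tendsto (fun n => x n / n) atTop (𝓝 s)) : ∀ᶠ n in atTop, 0 < x n := by
  filter_upwards [eventually_gt_atTop 0, hx.eventually_const_lt hs] with n hn hxn
  exact (div_pos_iff_of_pos_right (by positivity)).1 hxn

lemma hasExpRate_pow_mul_exp_neg_div_factorial (hs : 0 < s)
    (hx : Tendsto (fun n => x n / n) atTop (𝓝 s)) :
    HasExpRate (fun n => x n ^ n * exp (-x n) / n.factorial) (log s + 1 - s) := by
  have hbase : Tendsto (fun n => x n / n * exp (-(x n / n))) atTop (𝓝 (s * exp (-s))) :=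
    hx.mul hx.neg.rexp
  have hrate := (HasExpRate.pow_of_tendsto hbase (by positivity)).div hasExpRate_factorial_div_pow
  have hv : log (s * exp (-s)) - -1 = log s + 1 - s := by
    rw [log_mul hs.ne' (exp_ne_zero _), log_exp]
    ring
  refine (hv ▸ hrate).congr' ?_
  filter_upwards [eventually_gt_atTop 0] with n hn
  rw [mul_pow, div_pow, ← exp_nat_mul, mul_neg, mul_div_cancel₀ _ (by positivity)]
  field_simp

lemma hasExpRate_mul_exp_one_sub_rpow (hs : 0 < s) (hx : Tendsto (fun n => x n / n) atTop (𝓝 s)) :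
    HasExpRate (fun n => (x n / n * exp (1 - x n / n)) ^ (n : ℝ)) (log s + 1 - s) := by
  have hbase : Tendsto (fun n => x n / n * exp (1 - x n / n)) atTop (𝓝 (s * exp (1 - s))) :=
    hx.mul (hx.const_sub 1).rexp
  have hrate := HasExpRate.pow_of_tendsto hbase (by positivity)
  rw [log_mul hs.ne' (exp_ne_zero _), log_exp, ← add_sub_assoc] at hrate
  simpa only [rpow_natCast] using hrate

lemma hasExpRate_gammaU_of_one_lt (hs : 1 < s) (hx : Tendsto (fun n => x n / n) atTop (𝓝 s)) :
    HasExpRate (fun n => gammaU n (x n)) (log s + 1 - s) := by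
  have hs_pos : 0 < s := one_pos.trans hs
  have hx_pos := eventually_pos_of_tendsto_div_natCast hs_pos hx
  have hlower := (hasExpRate_pow_mul_exp_neg_div_factorial hs_pos hx).div
    (HasExpRate.of_tendsto hx hs_pos)
  rw [sub_zero] at hlower
  refine hlower.squeeze (hasExpRate_mul_exp_one_sub_rpow hs_pos hx) ?_ ?_
  · filter_upwards [eventually_gt_atTop 0, hx_pos] with n hn hxn
    refine le_trans (le_of_eq ?_) (le_gammaU (Nat.one_le_cast.2 hn) hxn.le)
    rw [rpow_sub_one hxn.ne', rpow_natCast, ← Gamma_nat_eq_factorial, Gamma_add_one (by positivity)]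
    field_simp
  · filter_upwards [eventually_gt_atTop 0, hx.eventually_const_lt hs] with n hn hxn
    exact gammaU_le (by positivity) ((one_lt_div (by positivity)).1 hxn).le

lemma hasExpRate_gammaL_of_lt_one (hs_pos : 0 < s) (hs : s < 1)
    (hx : Tendsto (fun n => x n / n) atTop (𝓝 s)) :
    HasExpRate (fun n => gammaL n (x n)) (log s + 1 - s) := by
  have hx_pos := eventually_pos_of_tendsto_div_natCast hs_pos hx
  refine (hasExpRate_pow_mul_exp_neg_div_factorial hs_pos hx).squeeze
    (hasExpRate_mul_exp_one_sub_rpow hs_pos hx) ?_ ?_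
  · filter_upwards [eventually_gt_atTop 0, hx_pos] with n hn hxn
    simpa only [rpow_natCast, Gamma_nat_eq_factorial] using
      le_gammaL (p := n) (by positivity) hxn.le
  · filter_upwards [eventually_gt_atTop 0, hx_pos, hx.eventually_lt_const hs] with n hn hxn hlt
    exact gammaL_le hxn ((div_lt_one (by positivity)).1 hlt).le

lemma eventually_gammaU_add_gammaL (hs : 0 < s) (hx : Tendsto (fun n => x n / n) atTop (𝓝 s)) :
    ∀ᶠ n : ℕ in atTop, gammaU n (x n) + gammaL n (x n) = 1 := by
  filter_upwards [eventually_gt_atTop 0, eventually_pos_of_tendsto_div_natCast hs hx] with n hn hxn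
  exact gammaU_add_gammaL (by positivity) hxn.le

lemma hasExpRate_gammaU_of_lt_one (hs_pos : 0 < s) (hs : s < 1)
    (hx : Tendsto (fun n => x n / n) atTop (𝓝 s)) :
    HasExpRate (fun n => gammaU n (x n)) 0 := by
  have hneg : log s + 1 - s < 0 := by linarith [log_lt_sub_one_of_pos hs_pos hs.ne]
  have hone := ((hasExpRate_gammaL_of_lt_one hs_pos hs hx).tendsto_zero hneg).const_sub 1
  rw [sub_zero] at hone
  refine HasExpRate.of_tendsto (hone.congr' ?_) one_pos
  filter_upwards [eventually_gammaU_add_gammaL hs_pos hx] with n hn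
  exact (eq_sub_of_add_eq hn).symm

lemma hasExpRate_gammaL_of_one_lt (hs : 1 < s) (hx : Tendsto (fun n => x n / n) atTop (𝓝 s)) :
    HasExpRate (fun n => gammaL n (x n)) 0 := by
  have hs_pos : 0 < s := one_pos.trans hs
  have hneg : log s + 1 - s < 0 := by linarith [log_lt_sub_one_of_pos hs_pos hs.ne']
  have hone := ((hasExpRate_gammaU_of_one_lt hs hx).tendsto_zero hneg).const_sub 1
  rw [sub_zero] at hone
  refine HasExpRate.of_tendsto (hone.congr' ?_) one_pos
  filter_upwards [eventually_gammaU_add_gammaL hs_pos hx] with n hn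
  exact (eq_sub_of_add_eq' hn).symm

end IncompleteGammaRates

/-! ### Expected number of points -/

lemma tendsto_kappa_quotient_mul_rpow {γ : ℕ → ℝ} {α ρ : ℝ}
    (hγ : Tendsto (fun n : ℕ => γ n / (n : ℝ) ^ α) atTop (𝓝 ρ)) :
    Tendsto (fun n : ℕ => 2 * γ n * kappa (n - 1) / (n * kappa n) * (n : ℝ) ^ (1 / 2 - α)) atTop
      (𝓝 (√2 * ρ / √π)) := by
  have hlim := (hγ.const_mul 2).mul tendsto_kappa_pred_div_sqrt_mul_kappa
  have hvalue : 2 * ρ * (√(2 * π))⁻¹ = √2 * ρ / √π := by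
    have hsqrt : √(2 : ℝ) ^ 2 = 2 := sq_sqrt zero_le_two
    rw [sqrt_mul zero_le_two]
    field_simp
    linear_combination -ρ * hsqrt
  refine (hvalue ▸ hlim).congr' ?_
  filter_upwards [eventually_gt_atTop 0] with n hn
  have hkappa := kappa_pos n
  have hsqrt : √(n : ℝ) ^ 2 = n := sq_sqrt n.cast_nonneg
  rw [rpow_sub (by positivity), ← sqrt_eq_rpow]
  field_simp
  linear_combination -(γ n * kappa (n - 1)) * hsqrt

lemma tendsto_mul_rpow_mul_div {c : ℕ → ℝ} {α σ : ℝ} (R : ℝ)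
    (hc : Tendsto (fun n : ℕ => c n * (n : ℝ) ^ (1 / 2 - α)) atTop (𝓝 σ)) :
    Tendsto (fun n : ℕ => c n * (n : ℝ) ^ (3 / 2 - α) * R / n) atTop (𝓝 (σ * R)) := by
  refine (hc.mul_const R).congr' ?_
  filter_upwards [eventually_gt_atTop 0] with n hn
  rw [show 3 / 2 - α = 1 / 2 - α + 1 by ring, rpow_add_one (by positivity)]
  field_simp

lemma hasExpRate_expected_points {c : ℕ → ℝ} {α σ : ℝ} (lam : ℝ) (hσ : 0 < σ)
    (hc : Tendsto (fun n : ℕ => c n * (n : ℝ) ^ (1 / 2 - α)) atTop (𝓝 σ)) :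
    HasExpRate (fun n : ℕ => (n : ℝ) ^ ((n : ℝ) * (α - 1)) * exp (n * lam) * Gamma (n + 1) *
      kappa n * c n ^ (-(n : ℝ))) (lam + log (√(2 * π) / σ) - 1 / 2) := by
  have hexp := HasExpRate.pow_of_tendsto (tendsto_const_nhds (x := exp lam)) (exp_pos lam)
  have hrate := ((hexp.mul hasExpRate_kappa_mul_sqrt_factorial).mul
    (hasExpRate_factorial_div_pow.rpow_const (1 / 2))).div (HasExpRate.pow_of_tendsto hc hσ)
  have hv : log (exp lam) + log √(2 * π) + 1 / 2 * -1 - log σ =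
      lam + log (√(2 * π) / σ) - 1 / 2 := by
    rw [log_exp, log_div (by positivity) hσ.ne']
    ring
  refine (hv ▸ hrate).congr' ?_
  filter_upwards [eventually_gt_atTop 0, hc.eventually_const_lt hσ] with n hn hcn
  have hc_pos : 0 < c n := pos_of_mul_pos_left hcn (by positivity)
  have hfactorial : √(n.factorial : ℝ) ^ 2 = n.factorial := sq_sqrt (Nat.cast_nonneg _)
  have hpowers : (n : ℝ) ^ ((n : ℝ) * (α - 1)) =
      (√((n : ℝ) ^ n) * ((n : ℝ) ^ (1 / 2 - α)) ^ n)⁻¹ := by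
    rw [sqrt_eq_rpow, ← rpow_natCast, ← rpow_natCast, ← rpow_mul (by positivity),
      ← rpow_mul (by positivity), ← rpow_add (by positivity), ← rpow_neg (by positivity)]
    ring_nf
  rw [hpowers, ← sqrt_eq_rpow, sqrt_div (Nat.cast_nonneg _), mul_pow, ← exp_nat_mul,
    Gamma_nat_eq_factorial, rpow_neg hc_pos.le, rpow_natCast]
  field_simp
  rw [hfactorial]

lemma log_sqrt_two_pi_div_sub_half {ρ : ℝ} (hρ : 0 < ρ) :
    log (√(2 * π) / (√2 * ρ / √π)) - 1 / 2 = log (π / (ρ * √(exp 1))) := by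
  have hquot : √(2 * π) / (√2 * ρ / √π) = π / ρ := by
    rw [sqrt_mul zero_le_two]
    field_simp
    exact sq_sqrt pi_pos.le
  rw [hquot, ← div_div, log_div (x := π / ρ) (by positivity) (by positivity),
    log_sqrt (exp_pos 1).le, log_exp]

lemma log_pi_div_add_log_add_one {ρ R : ℝ} (hρ : 0 < ρ) (hR : 0 < R) :
    log (π / (ρ * √(exp 1))) + log (√2 * ρ * R / √π) + 1 = log (√(2 * π * exp 1) * R) := by
  have hpi : √π ^ 2 = π := sq_sqrt pi_pos.le
  have he : √(exp 1) ^ 2 = exp 1 := sq_sqrt (exp_pos 1).le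
  calc log (π / (ρ * √(exp 1))) + log (√2 * ρ * R / √π) + 1
      = log (π / (ρ * √(exp 1)) * (√2 * ρ * R / √π) * exp 1) := by
        rw [log_mul (by positivity) (exp_ne_zero 1), log_mul (by positivity) (by positivity),
          log_exp]
    _ = log (√(2 * π * exp 1) * R) := by
        rw [sqrt_mul (by positivity), sqrt_mul zero_le_two]
        congr 1
        field_simp
        rw [hpi, he, mul_comm]

/-- Exponential rates for the expected number of Poisson data points in the zero cell at
distance more than (resp. at most) `n^{3/2-α} R` from the origin. -/
theorem expected_points_far_near_asymptotics (ρ lam α R : ℝ) (hρ : 0 < ρ) (hR : 0 < R)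
    (γ : ℕ → ℝ) (hγpos : ∀ n, 0 < γ n)
    (hγ : Tendsto (fun n : ℕ => γ n / (n : ℝ) ^ α) atTop (nhds ρ))
    (lamSeq c E : ℕ → ℝ)
    (hlam : ∀ n : ℕ, lamSeq n = (n : ℝ) ^ ((n : ℝ) * (α - 1)) * Real.exp ((n : ℝ) * lam))
    (hc : ∀ n : ℕ, c n = 2 * γ n * kappa (n - 1) / ((n : ℝ) * kappa n))
    (hE : ∀ n : ℕ, E n =
      lamSeq n * Real.Gamma ((n : ℝ) + 1) * kappa n * c n ^ (-(n : ℝ))) :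
    (Real.sqrt 2 * ρ * R / Real.sqrt Real.pi > 1 →
      Tendsto (fun n : ℕ =>
          (1 / (n : ℝ)) * Real.log (E n * gammaU n (c n * (n : ℝ) ^ ((3 : ℝ) / 2 - α) * R)))
        atTop
        (nhds (lam + Real.log (Real.sqrt (2 * Real.pi * Real.exp 1) * R)
          - Real.sqrt 2 * ρ * R / Real.sqrt Real.pi))) ∧
    (Real.sqrt 2 * ρ * R / Real.sqrt Real.pi < 1 →
      Tendsto (fun n : ℕ =>
          (1 / (n : ℝ)) * Real.log (E n * gammaU n (c n * (n : ℝ) ^ ((3 : ℝ) / 2 - α) * R)))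
        atTop
        (nhds (lam + Real.log (Real.pi / (ρ * Real.sqrt (Real.exp 1)))))) ∧
    (Real.sqrt 2 * ρ * R / Real.sqrt Real.pi < 1 →
      Tendsto (fun n : ℕ =>
          (1 / (n : ℝ)) * Real.log (E n * gammaL n (c n * (n : ℝ) ^ ((3 : ℝ) / 2 - α) * R)))
        atTop
        (nhds (lam + Real.log (Real.sqrt (2 * Real.pi * Real.exp 1) * R)
          - Real.sqrt 2 * ρ * R / Real.sqrt Real.pi))) ∧
    (Real.sqrt 2 * ρ * R / Real.sqrt Real.pi > 1 →
      Tendsto (fun n : ℕ =>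
          (1 / (n : ℝ)) * Real.log (E n * gammaL n (c n * (n : ℝ) ^ ((3 : ℝ) / 2 - α) * R)))
        atTop
        (nhds (lam + Real.log (Real.pi / (ρ * Real.sqrt (Real.exp 1)))))) := by
  set s : ℝ := √2 * ρ * R / √π with hs_def
  have hs : 0 < s := by positivity
  have hc_lim : Tendsto (fun n : ℕ => c n * (n : ℝ) ^ (1 / 2 - α)) atTop (𝓝 (√2 * ρ / √π)) := by
    simpa only [hc] using tendsto_kappa_quotient_mul_rpow hγ
  have hx : Tendsto (fun n : ℕ => c n * (n : ℝ) ^ ((3 : ℝ) / 2 - α) * R / n) atTop (𝓝 s) := by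
    simpa only [hs_def, div_mul_eq_mul_div] using tendsto_mul_rpow_mul_div R hc_lim
  have hE_rate : HasExpRate E (lam + log (π / (ρ * √(exp 1)))) := by
    rw [← log_sqrt_two_pi_div_sub_half hρ, ← add_sub_assoc, funext hE, funext hlam]
    exact hasExpRate_expected_points lam (by positivity) hc_lim
  have hvalue : lam + log (π / (ρ * √(exp 1))) + (log s + 1 - s) =
      lam + log (√(2 * π * exp 1) * R) - s := by
    rw [← log_pi_div_add_log_add_one hρ hR]
    ring
  refine ⟨fun h => ?_, fun h => ?_, fun h => ?_, fun h => ?_⟩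
  · exact hvalue ▸ (hE_rate.mul (hasExpRate_gammaU_of_one_lt h hx)).tendsto_log
  · simpa only [add_zero] using (hE_rate.mul (hasExpRate_gammaU_of_lt_one hs h hx)).tendsto_log
  · exact hvalue ▸ (hE_rate.mul (hasExpRate_gammaL_of_lt_one hs h hx)).tendsto_log
  · simpa only [add_zero] using (hE_rate.mul (hasExpRate_gammaL_of_one_lt h hx)).tendsto_log
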